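/- Let a ∈ ℂ with |a| = 1 and a ≠ 1 a primitive n-th root of unity. Then the numerical range of C_{az} on F² equals the convex hull of {1, a, a², ..., a^{n-1}} (the filled regular-type polygon with these vertices; the interval [-1,1] when n = 2). -/

import Mathlib

open MeasureTheory Complex

/-- The Gaussian measure `π⁻¹ e^{-|z|²} dA(z)` on `ℂ`. -/
noncomputable def gaussMeasure : Measure ℂ :=
  (volume : Measure ℂ).withDensity fun z => ENNReal.ofReal (Real.exp (-(‖z‖ ^ 2)) / Real.pi)

/-- A function is entire if it is differentiable on all of `ℂ`. -/
def Entire (f : ℂ → ℂ) : Prop := Differentiable ℂ f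

/-- The squared Fock-space norm `∫ |f|² dμ`. -/
noncomputable def fockNormSq (f : ℂ → ℂ) : ℝ := ∫ z, ‖f z‖ ^ 2 ∂gaussMeasure

/-- Membership in the Fock space `F²`: entire and square integrable w.r.t. the Gaussian. -/
def MemFock (f : ℂ → ℂ) : Prop :=
  Entire f ∧ Integrable (fun z => ‖f z‖ ^ 2) gaussMeasure

/-- The Fock-space inner product `⟨f, g⟩ = ∫ f ḡ dμ`. -/
noncomputable def fockInner (f g : ℂ → ℂ) : ℂ :=
  ∫ z, f z * (starRingEnd ℂ) (g z) ∂gaussMeasure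

/-- The weighted composition operator `C_{ψ,φ} f = ψ · (f ∘ φ)`. -/
def wcomp (ψ φ f : ℂ → ℂ) : ℂ → ℂ := fun z => ψ z * f (φ z)

/-- Boundedness of `C_{ψ,φ}` on `F²`. -/
def BoundedWCO (ψ φ : ℂ → ℂ) : Prop :=
  ∃ C : ℝ, ∀ f, MemFock f →
    MemFock (wcomp ψ φ f) ∧ fockNormSq (wcomp ψ φ f) ≤ C * fockNormSq f

/-- The numerical range `W(C_{ψ,φ}) = {⟨C_{ψ,φ} f, f⟩ : ‖f‖ = 1}` on `F²`. -/
noncomputable def numRange (ψ φ : ℂ → ℂ) : Set ℂ :=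
  {w | ∃ f, MemFock f ∧ fockNormSq f = 1 ∧ w = fockInner (wcomp ψ φ f) f}

/-- The point spectrum of `C_{ψ,φ}` on `F²`. -/
def pointSpectrum (ψ φ : ℂ → ℂ) : Set ℂ :=
  {lam | ∃ f, MemFock f ∧ f ≠ 0 ∧ wcomp ψ φ f = fun z => lam * f z}

/-- Compactness of `C_{ψ,φ}` on `F²`: it is bounded and the image of every sequence in the
unit ball of `F²` has a subsequence which is Cauchy in the `F²` norm. -/
def CompactWCO (ψ φ : ℂ → ℂ) : Prop :=
  BoundedWCO ψ φ ∧ ∀ f : ℕ → ℂ → ℂ, (∀ k, MemFock (f k) ∧ fockNormSq (f k) ≤ 1) →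
    ∃ g : ℕ → ℕ, StrictMono g ∧ ∀ ε : ℝ, 0 < ε → ∃ N : ℕ, ∀ i, N ≤ i → ∀ j, N ≤ j →
      fockNormSq (fun z => wcomp ψ φ (f (g i)) z - wcomp ψ φ (f (g j)) z) < ε

theorem measurePreserving_mul_gaussMeasure {a : ℂ} (ha : ‖a‖ = 1) :
    MeasurePreserving (fun z => a * z) gaussMeasure gaussMeasure := by
  have hvol : MeasurePreserving (fun z : ℂ => a * z) volume volume :=
    (rotation ⟨a, mem_sphere_zero_iff_norm.2 ha⟩).measurePreserving
  refine ⟨hvol.measurable, Measure.ext fun s hs => ?_⟩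
  rw [Measure.map_apply hvol.measurable hs, gaussMeasure,
    withDensity_apply _ (hvol.measurable hs), withDensity_apply _ hs,
    ← hvol.setLIntegral_comp_preimage hs (by fun_prop)]
  simp [ha]

theorem measurableEmbedding_mul {a : ℂ} (ha : ‖a‖ = 1) :
    MeasurableEmbedding (fun z : ℂ => a * z) :=
  measurableEmbedding_mulLeft₀ (norm_ne_zero_iff.1 (by simp [ha]))

theorem MemFock.memLp {f : ℂ → ℂ} (hf : MemFock f) : MemLp f 2 gaussMeasure :=
  (memLp_two_iff_integrable_sq_norm hf.1.continuous.aestronglyMeasurable).2 hf.2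

theorem memFock_of_memLp {f : ℂ → ℂ} (hf : Entire f) (hL : MemLp f 2 gaussMeasure) : MemFock f :=
  ⟨hf, (memLp_two_iff_integrable_sq_norm hL.1).1 hL⟩

theorem MemFock.const_mul {f : ℂ → ℂ} (hf : MemFock f) (c : ℂ) : MemFock fun z => c * f z :=
  memFock_of_memLp (hf.1.const_mul c) (hf.memLp.const_mul c)

theorem MemFock.sum {ι : Type*} (s : Finset ι) {g : ι → ℂ → ℂ} (hg : ∀ i ∈ s, MemFock (g i)) :
    MemFock fun z => ∑ i ∈ s, g i z :=
  memFock_of_memLp (Differentiable.fun_sum fun i hi => (hg i hi).1)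
    (memLp_finsetSum s fun i hi => (hg i hi).memLp)

theorem MemFock.comp_mul {f : ℂ → ℂ} (hf : MemFock f) {a : ℂ} (ha : ‖a‖ = 1) :
    MemFock fun z => f (a * z) :=
  memFock_of_memLp (Differentiable.comp hf.1 (differentiable_id.const_mul a))
    (hf.memLp.comp_measurePreserving (measurePreserving_mul_gaussMeasure ha))

theorem MemFock.integrable_mul_conj {f g : ℂ → ℂ} (hf : MemFock f) (hg : MemFock g) :
    Integrable (fun z => f z * (starRingEnd ℂ) (g z)) gaussMeasure :=
  hf.memLp.integrable_mul hg.memLp.star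

theorem fockInner_self (f : ℂ → ℂ) : fockInner f f = fockNormSq f := by
  simp only [fockInner, fockNormSq, Complex.mul_conj, Complex.normSq_eq_norm_sq]
  exact integral_ofReal

theorem fockInner_comp_mul (f g : ℂ → ℂ) {a : ℂ} (ha : ‖a‖ = 1) :
    fockInner (fun z => f (a * z)) (fun z => g (a * z)) = fockInner f g :=
  (measurePreserving_mul_gaussMeasure ha).integral_comp (measurableEmbedding_mul ha)
    fun z => f z * (starRingEnd ℂ) (g z)

theorem fockInner_const_mul_left (c : ℂ) (f g : ℂ → ℂ) :
    fockInner (fun z => c * f z) g = c * fockInner f g := by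
  simp only [fockInner, mul_assoc]
  exact integral_const_mul c _

theorem fockInner_const_mul_right (c : ℂ) (f g : ℂ → ℂ) :
    fockInner f (fun z => c * g z) = (starRingEnd ℂ) c * fockInner f g := by
  simp only [fockInner, map_mul, mul_left_comm _ ((starRingEnd ℂ) c)]
  exact integral_const_mul _ _

theorem fockInner_sum_sum {ι : Type*} (s : Finset ι) {f g : ι → ℂ → ℂ}
    (hf : ∀ i ∈ s, MemFock (f i)) (hg : ∀ i ∈ s, MemFock (g i)) :
    fockInner (fun z => ∑ i ∈ s, f i z) (fun z => ∑ i ∈ s, g i z) =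
      ∑ i ∈ s, ∑ j ∈ s, fockInner (f i) (g j) := by
  simp only [fockInner, map_sum, Finset.sum_mul_sum]
  rw [integral_finsetSum _ fun i hi => integrable_finsetSum _ fun j hj =>
    (hf i hi).integrable_mul_conj (hg j hj)]
  exact Finset.sum_congr rfl fun i hi =>
    integral_finsetSum _ fun j hj => (hf i hi).integrable_mul_conj (hg j hj)

/-- Eigenfunctions of `C_{az}` for distinct unimodular eigenvalues are orthogonal. -/
theorem fockInner_eq_zero_of_eigen {a b c : ℂ} (ha : ‖a‖ = 1) (hc : ‖c‖ = 1) (hbc : b ≠ c)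
    {f g : ℂ → ℂ} (hf : ∀ z, f (a * z) = b * f z) (hg : ∀ z, g (a * z) = c * g z) :
    fockInner f g = 0 := by
  have h := fockInner_comp_mul f g ha
  simp only [hf, hg, fockInner_const_mul_left, fockInner_const_mul_right] at h
  by_contra h0
  have h1 : b * (starRingEnd ℂ) c = 1 := mul_right_cancel₀ h0 (by linear_combination h)
  have h2 : c * (starRingEnd ℂ) c = 1 := by simp [Complex.mul_conj, Complex.normSq_eq_norm_sq, hc]
  exact hbc (mul_right_cancel₀ (right_ne_zero_of_mul_eq_one h2) (h1.trans h2.symm))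

section Decomposition

variable {a : ℂ} {n : ℕ} {g : ℕ → ℂ → ℂ}

theorem fockInner_sum_eigen (ha : ‖a‖ = 1) (hprim : IsPrimitiveRoot a n)
    (hg : ∀ j, MemFock (g j)) (hga : ∀ j z, g j (a * z) = a ^ j * g j z) (c : ℕ → ℂ) :
    fockInner (fun z => ∑ j ∈ Finset.range n, c j * g j z)
      (fun z => ∑ j ∈ Finset.range n, g j z) =
      ∑ j ∈ Finset.range n, c j * fockNormSq (g j) := by
  rw [fockInner_sum_sum (f := fun j z => c j * g j z) _ (fun j _ => (hg j).const_mul _)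
    fun j _ => hg j]
  refine Finset.sum_congr rfl fun i hi => ?_
  simp only [fockInner_const_mul_left]
  rw [Finset.sum_eq_single_of_mem i hi, fockInner_self]
  intro j hj hji
  rw [fockInner_eq_zero_of_eigen ha (by simp [ha]) _ (hga i) (hga j), mul_zero]
  exact fun h => hji (hprim.pow_inj (Finset.mem_range.1 hi) (Finset.mem_range.1 hj) h).symm

theorem fockNormSq_sum_eigen (ha : ‖a‖ = 1) (hprim : IsPrimitiveRoot a n)
    (hg : ∀ j, MemFock (g j)) (hga : ∀ j z, g j (a * z) = a ^ j * g j z) :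
    fockNormSq (fun z => ∑ j ∈ Finset.range n, g j z) =
      ∑ j ∈ Finset.range n, fockNormSq (g j) := by
  have h := fockInner_sum_eigen ha hprim hg hga fun _ => 1
  simp only [one_mul, fockInner_self] at h
  exact_mod_cast h

theorem fockInner_wcomp_sum_eigen (ha : ‖a‖ = 1) (hprim : IsPrimitiveRoot a n)
    (hg : ∀ j, MemFock (g j)) (hga : ∀ j z, g j (a * z) = a ^ j * g j z) :
    fockInner (wcomp (fun _ => 1) (fun z => a * z) fun z => ∑ j ∈ Finset.range n, g j z)
      (fun z => ∑ j ∈ Finset.range n, g j z) =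
      ∑ j ∈ Finset.range n, fockNormSq (g j) • a ^ j := by
  have h := fockInner_sum_eigen ha hprim hg hga fun j => a ^ j
  have hw : wcomp (fun _ => 1) (fun z => a * z) (fun z => ∑ j ∈ Finset.range n, g j z) =
      fun z => ∑ j ∈ Finset.range n, a ^ j * g j z := by
    funext z
    simp only [wcomp, hga, one_mul]
  rw [hw, h]
  exact Finset.sum_congr rfl fun j _ => by rw [Complex.real_smul, mul_comm]

end Decomposition

/-- The component of `f` in the eigenspace of `C_{az}` for the eigenvalue `a ^ j`. -/
noncomputable def eigenPart (a : ℂ) (n : ℕ) (f : ℂ → ℂ) (j : ℕ) (z : ℂ) : ℂ :=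
  ∑ k ∈ Finset.range n, (n : ℂ)⁻¹ * (a⁻¹ ^ j) ^ k * f (a ^ k * z)

theorem MemFock.eigenPart {f : ℂ → ℂ} (hf : MemFock f) {a : ℂ} (ha : ‖a‖ = 1) (n j : ℕ) :
    MemFock (eigenPart a n f j) :=
  MemFock.sum _ fun k _ => (hf.comp_mul (a := a ^ k) (by simp [ha])).const_mul _

theorem eigenPart_mul {a : ℂ} {n : ℕ} (hn : 0 < n) (hprim : a ^ n = 1) (f : ℂ → ℂ) (j : ℕ)
    (z : ℂ) : eigenPart a n f j (a * z) = a ^ j * eigenPart a n f j z := by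
  have ha0 : a ≠ 0 := by rintro rfl; simp [hn.ne'] at hprim
  let F : ℕ → ℂ := fun k => (n : ℂ)⁻¹ * (a⁻¹ ^ j) ^ k * f (a ^ k * z)
  have hshift : ∑ k ∈ Finset.range n, F (k + 1) = ∑ k ∈ Finset.range n, F k := by
    have h0 : F n = F 0 := by
      simp [F, hprim, ← pow_mul, mul_comm j n, pow_mul a n]
    have h := (Finset.sum_range_succ' F n).symm.trans (Finset.sum_range_succ F n)
    rw [h0] at h
    exact add_right_cancel h
  calc eigenPart a n f j (a * z) = ∑ k ∈ Finset.range n, a ^ j * F (k + 1) := by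
        refine Finset.sum_congr rfl fun k _ => ?_
        have h1 : a ^ j * a⁻¹ ^ j = 1 := by rw [← mul_pow, mul_inv_cancel₀ ha0, one_pow]
        simp only [F, pow_succ _ k, ← mul_assoc (a ^ k)]
        linear_combination (-(n : ℂ)⁻¹ * (a⁻¹ ^ j) ^ k * f (a ^ k * a * z)) * h1
    _ = a ^ j * eigenPart a n f j z := by
        rw [← Finset.mul_sum, hshift]
        rfl

theorem sum_eigenPart {a : ℂ} {n : ℕ} (hn : 0 < n) (hprim : IsPrimitiveRoot a n) (f : ℂ → ℂ)
    (z : ℂ) : ∑ j ∈ Finset.range n, eigenPart a n f j z = f z := by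
  have hn0 : (n : ℂ) ≠ 0 := Nat.cast_ne_zero.2 hn.ne'
  simp only [eigenPart]
  rw [Finset.sum_comm, Finset.sum_eq_single_of_mem 0 (Finset.mem_range.2 hn)]
  · simp [hn0]
  · intro k hk hk0
    have hne : a⁻¹ ^ k ≠ 1 :=
      hprim.inv.pow_ne_one_of_pos_of_lt hk0 (Finset.mem_range.1 hk)
    have hgeom : ∑ j ∈ Finset.range n, (a⁻¹ ^ k) ^ j = 0 := by
      rw [geom_sum_eq hne, ← pow_mul, mul_comm, pow_mul, hprim.inv.pow_eq_one]
      simp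
    rw [← Finset.sum_mul, ← Finset.mul_sum]
    simp only [← pow_mul, mul_comm _ k] at hgeom ⊢
    rw [hgeom, mul_zero, zero_mul]

theorem integral_gaussMeasure (F : ℂ → ℝ) :
    ∫ z, F z ∂gaussMeasure = ∫ z, Real.exp (-(‖z‖ ^ 2)) / Real.pi * F z := by
  rw [gaussMeasure, integral_withDensity_eq_integral_toReal_smul (by fun_prop) (by simp)]
  refine integral_congr_ae (Filter.Eventually.of_forall fun z => ?_)
  simp only [smul_eq_mul]
  rw [ENNReal.toReal_ofReal (by positivity)]

theorem fockNormSq_pow_pos (k : ℕ) : 0 < fockNormSq fun z => z ^ k := by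
  have h := Complex.integral_rpow_mul_exp_neg_rpow (p := 2) (q := (2 * k : ℕ)) (by norm_num)
    (by have : (0 : ℝ) ≤ (2 * k : ℕ) := by positivity
        linarith)
  have h2 : fockNormSq (fun z => z ^ k) =
      Real.pi⁻¹ * ∫ x : ℂ, ‖x‖ ^ ((2 * k : ℕ) : ℝ) * Real.exp (-‖x‖ ^ (2 : ℝ)) := by
    rw [fockNormSq, integral_gaussMeasure, ← integral_const_mul]
    congr 1
    ext z
    rw [Real.rpow_natCast, Real.rpow_two, norm_pow]
    ring
  rw [h2, h]
  have := Real.Gamma_pos_of_pos (s := (((2 * k : ℕ) : ℝ) + 2) / 2) (by positivity)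
  positivity

theorem memFock_pow (k : ℕ) : MemFock fun z => z ^ k :=
  ⟨differentiable_pow k, Integrable.of_integral_ne_zero (fockNormSq_pow_pos k).ne'⟩

theorem fockNormSq_const_mul (c : ℂ) (f : ℂ → ℂ) :
    fockNormSq (fun z => c * f z) = ‖c‖ ^ 2 * fockNormSq f := by
  simp only [fockNormSq, norm_mul, mul_pow]
  exact integral_const_mul _ _

/-- The monomial of degree `k`, scaled to have squared norm `t`. -/
noncomputable def scaledMonomial (t : ℝ) (k : ℕ) (z : ℂ) : ℂ :=
  (√(t / fockNormSq fun z => z ^ k) : ℝ) * z ^ k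

theorem memFock_scaledMonomial (t : ℝ) (k : ℕ) : MemFock (scaledMonomial t k) :=
  (memFock_pow k).const_mul _

theorem fockNormSq_scaledMonomial {t : ℝ} (ht : 0 ≤ t) (k : ℕ) :
    fockNormSq (scaledMonomial t k) = t := by
  have h := fockNormSq_pow_pos k
  refine (fockNormSq_const_mul _ _).trans ?_
  rw [Complex.norm_real, Real.norm_eq_abs, sq_abs, Real.sq_sqrt (by positivity),
    div_mul_cancel₀ _ h.ne']

theorem scaledMonomial_mul (t : ℝ) (k : ℕ) (a z : ℂ) :
    scaledMonomial t k (a * z) = a ^ k * scaledMonomial t k z := by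
  simp only [scaledMonomial, mul_pow]
  ring

/-- If `|a| = 1` and `a ≠ 1` is a primitive `n`-th root of unity, the numerical range of
`C_{az}` on `F²` is the convex hull of `{1, a, …, a^{n-1}}`. -/
theorem numRange_Caz_primitive_root
    (a : ℂ) (ha : ‖a‖ = 1) (ha1 : a ≠ 1) (n : ℕ) (hn : 0 < n)
    (hprim : a ^ n = 1) (hmin : ∀ k : ℕ, 0 < k → k < n → a ^ k ≠ 1) :
    numRange (fun _ => 1) (fun z => a * z) =
      convexHull ℝ ((fun k : ℕ => a ^ k) '' {k | k < n}) := by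
  have hroot : IsPrimitiveRoot a n := .mk_of_lt a hn hprim hmin
  refine Set.Subset.antisymm ?_ ?_
  · rintro w ⟨f, hf, hf1, rfl⟩
    have hg := fun j => hf.eigenPart ha n j
    have hga := fun j z => eigenPart_mul hn hprim f j z
    have hsum : (fun z => ∑ j ∈ Finset.range n, eigenPart a n f j z) = f :=
      funext (sum_eigenPart hn hroot f)
    have hN := fockNormSq_sum_eigen ha hroot hg hga
    have hI := fockInner_wcomp_sum_eigen ha hroot hg hga
    rw [hsum] at hN hI
    rw [hI]
    refine (convex_convexHull ℝ _).sum_mem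
      (fun j _ => integral_nonneg fun z => by positivity) (hN.symm.trans hf1)
      fun j hj => subset_convexHull ℝ _ ⟨j, Finset.mem_range.1 hj, rfl⟩
  · intro w hw
    have himage : (fun k : ℕ => a ^ k) '' {k | k < n} =
        ((Finset.range n).image fun k => a ^ k : Finset ℂ) := by
      ext; simp
    have hinj : Set.InjOn (fun k : ℕ => a ^ k) (Finset.range n) := fun i hi j hj h =>
      hroot.pow_inj (Finset.mem_range.1 hi) (Finset.mem_range.1 hj) h
    rw [himage, Finset.mem_convexHull'] at hw
    obtain ⟨t, ht, ht1, rfl⟩ := hw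
    rw [Finset.sum_image hinj] at ht1 ⊢
    -- Negative parts are cut off because `t` is only controlled on powers below `n`.
    have hmax : ∀ k ∈ Finset.range n, max (t (a ^ k)) 0 = t (a ^ k) := fun k hk =>
      max_eq_left (ht _ (Finset.mem_image_of_mem _ hk))
    have hg := fun k => memFock_scaledMonomial (max (t (a ^ k)) 0) k
    have hga := fun k z => scaledMonomial_mul (max (t (a ^ k)) 0) k a z
    have hnorm : ∀ k ∈ Finset.range n,
        fockNormSq (scaledMonomial (max (t (a ^ k)) 0) k) = t (a ^ k) := fun k hk =>
      (fockNormSq_scaledMonomial (le_max_right _ _) k).trans (hmax k hk)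
    refine ⟨_, MemFock.sum (Finset.range n) fun k _ => hg k, ?_, ?_⟩
    · rw [fockNormSq_sum_eigen ha hroot hg hga, Finset.sum_congr rfl hnorm, ht1]
    · rw [fockInner_wcomp_sum_eigen ha hroot hg hga]
      exact Finset.sum_congr rfl fun k hk => by rw [hnorm k hk]
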